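/- Weighted stability inequality: Let Σ ⊂ ℝⁿ⁺¹ be an entire graphical smooth self-shrinker. Then for every smooth compactly supported function η on ℝⁿ⁺¹, ∫_Σ η² |A|² e^{−|X|²/4} ≤ ∫_Σ |∇_Σ η|² e^{−|X|²/4}. -/

import Mathlib

open Real MeasureTheory Metric Filter
open scoped RealInnerProductSpace ENNReal NNReal

noncomputable section

abbrev E (n : ℕ) : Type := EuclideanSpace ℝ (Fin n)

variable {n : ℕ}

/-- `√(1 + |Du|²)`, the area element of the graph of `u`. -/
def aEl (u : E n → ℝ) (x : E n) : ℝ := Real.sqrt (1 + ‖gradient u x‖ ^ 2)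

/-- The vector field `Du/√(1+|Du|²)`. -/
def Vfield (u : E n → ℝ) (x : E n) : E n := (aEl u x)⁻¹ • gradient u x

/-- `div (Du/√(1+|Du|²))`. -/
def divV (u : E n → ℝ) (x : E n) : ℝ :=
  ∑ i, fderiv ℝ (fun y => Vfield u y i) x (EuclideanSpace.single i 1)

/-- The self-shrinker equation for an entire graph. -/
def ShrinkerEq (u : E n → ℝ) : Prop :=
  ∀ x, divV u x = (⟪x, gradient u x⟫ - u x) / (2 * aEl u x)

/-- The mean curvature of the graph of `u` with respect to the upward unit normal. -/
def meanCurv (u : E n → ℝ) (x : E n) : ℝ := -divV u x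

/-- The position vector `X = (x, u x)` of a point of the graph. -/
def Pos (u : E n → ℝ) (x : E n) : E (n + 1) :=
  (WithLp.equiv 2 (Fin (n + 1) → ℝ)).symm (Fin.snoc ((WithLp.equiv 2 (Fin n → ℝ)) x) (u x))

/-- The upward unit normal `n = (-Du, 1)/√(1+|Du|²)` at the point of the graph over `x`. -/
def NmlAt (u : E n → ℝ) (x : E n) : E (n + 1) :=
  (WithLp.equiv 2 (Fin (n + 1) → ℝ)).symm
    (Fin.snoc (fun i => -(Vfield u x i)) ((aEl u x)⁻¹))

/-- Projection of `ℝ^{n+1}` onto the first `n` coordinates. -/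
def projE (p : E (n + 1)) : E n :=
  (WithLp.equiv 2 (Fin n → ℝ)).symm fun i => p i.castSucc

/-- The unit normal of the graph, extended to `ℝ^{n+1}` independently of the last coordinate. -/
def Nml (u : E n → ℝ) (p : E (n + 1)) : E (n + 1) := NmlAt u (projE p)

/-- The inverse induced metric `g^{ij} = δ_{ij} - u_i u_j/(1+|Du|²)` of the graph. -/
def ginv (u : E n → ℝ) (x : E n) (i j : Fin n) : ℝ :=
  (if i = j then 1 else 0) - gradient u x i * gradient u x j / (aEl u x) ^ 2

/-- The Hessian `u_{ij}` of `u`. -/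
def hess (u : E n → ℝ) (x : E n) (i j : Fin n) : ℝ :=
  fderiv ℝ (fun y => gradient u y j) x (EuclideanSpace.single i 1)

/-- `|A|²`, the squared norm of the second fundamental form of the graph of `u`:
`|A|² = g^{ik} g^{jl} h_{ij} h_{kl}` with `h_{ij} = u_{ij}/√(1+|Du|²)`. -/
def A2 (u : E n → ℝ) (x : E n) : ℝ :=
  (∑ i, ∑ j, ∑ k, ∑ l, ginv u x i k * ginv u x j l * hess u x i j * hess u x k l) /
    (aEl u x) ^ 2

/-- Coordinate components `g^{ij} ∂_j f` of the tangential gradient. -/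
def gradCoord (u f : E n → ℝ) (x : E n) (i : Fin n) : ℝ :=
  ∑ j, ginv u x i j * gradient f x j

/-- The tangential gradient `∇_Σ f` (for `f` defined on the base, pulled back to the graph),
as a vector in `ℝ^{n+1}`. -/
def gradSigma (u f : E n → ℝ) (x : E n) : E (n + 1) :=
  (WithLp.equiv 2 (Fin (n + 1) → ℝ)).symm
    (Fin.snoc (fun i => gradCoord u f x i) (∑ i, gradient u x i * gradCoord u f x i))

/-- The Laplace–Beltrami operator of the graph:
`Δ_Σ f = (1/√g) ∂_i (√g g^{ij} ∂_j f)`. -/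
def lapSigma (u f : E n → ℝ) (x : E n) : ℝ :=
  (aEl u x)⁻¹ *
    ∑ i, fderiv ℝ (fun y => aEl u y * gradCoord u f y i) x (EuclideanSpace.single i 1)

/-- The tangential gradient `∇_Σ η` of an ambient function `η : ℝ^{n+1} → ℝ` along the graph:
the ambient gradient minus its normal component. -/
def gradSigmaAmb (u : E n → ℝ) (η : E (n + 1) → ℝ) (x : E n) : E (n + 1) :=
  gradient η (Pos u x) - ⟪gradient η (Pos u x), NmlAt u x⟫ • NmlAt u x

/-- `Vol(Σ ∩ B_R)`: the area of the part of the graph inside the ball of radius `R`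
in `ℝ^{n+1}`, computed by the area formula. -/
def sVol (u : E n → ℝ) (R : ℝ) : ℝ := ∫ x in {x : E n | ‖Pos u x‖ ≤ R}, aEl u x

/-- `M_R = sup_{|x| ≤ R} |u|`. -/
def supBall (u : E n → ℝ) (R : ℝ) : ℝ := ⨆ x : Metric.closedBall (0 : E n) R, |u x.1|

end

/-!
The vertical component `1/a = ⟨N, e_{n+1}⟩` of the unit normal, `a = √(1+|Du|²)`, is a positive
Jacobi function of the self-shrinker. Equivalently, for the drift operator
`L = e^{|X|²/4} div_Σ (e^{-|X|²/4} ∇_Σ ·)` one has `L log a = |A|² + |∇_Σ log a|²`. Multiplying by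
`η² e^{-|X|²/4}` and integrating by parts gives the inequality, since
`|∇_Σ η + η ∇_Σ log a|² ≥ 0`.

On the base `ℝⁿ`, with `V = Du/a` and `P = g⁻¹`, the identity is a computation with endomorphisms:
`P D²u = a DV`, so that `|A|² = tr (DV)²` and `P ∇a = a DV(V)`; moreover
`div (DV(V)) = tr (DV)² + D(div V)(V)`, and `D(div V)` comes from the differentiated shrinker
equation.
-/

section Divergence

variable {F G : Type*} [NormedAddCommGroup F] [NormedSpace ℝ F]
  [NormedAddCommGroup G] [NormedSpace ℝ G]

lemma integrable_fderiv_of_hasCompactSupport [MeasurableSpace F] [OpensMeasurableSpace F]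
    {μ : Measure F} [IsFiniteMeasureOnCompacts μ] {f : F → G} (hf : ContDiff ℝ 1 f)
    (hfc : HasCompactSupport f) : Integrable (fderiv ℝ f) μ :=
  (hf.continuous_fderiv one_ne_zero).integrable_of_hasCompactSupport (hfc.fderiv (𝕜 := ℝ))

variable [FiniteDimensional ℝ F]

/-- The trace of an endomorphism, as a continuous linear functional. -/
noncomputable def traceCLM (F : Type*) [NormedAddCommGroup F] [NormedSpace ℝ F]
    [FiniteDimensional ℝ F] : (F →L[ℝ] F) →L[ℝ] ℝ :=
  (LinearMap.trace ℝ F ∘ₗ ContinuousLinearMap.coeLM ℝ).toContinuousLinearMap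

lemma traceCLM_apply (T : F →L[ℝ] F) : traceCLM F T = LinearMap.trace ℝ F T := rfl

lemma traceCLM_smulRight (f : F →L[ℝ] ℝ) (v : F) : traceCLM F (f.smulRight v) = f v :=
  LinearMap.trace_smulRight f.toLinearMap v

/-- The divergence `tr DX` of a vector field `X`. -/
noncomputable def divergence (X : F → F) (x : F) : ℝ := traceCLM F (fderiv ℝ X x)

lemma contDiff_divergence {k : WithTop ℕ∞} {X : F → F} (hX : ContDiff ℝ (k + 1) X) :
    ContDiff ℝ k (divergence X) :=
  (traceCLM F).contDiff.comp (hX.fderiv_right le_rfl)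

lemma divergence_smul {f : F → ℝ} {X : F → F} {x : F} (hf : DifferentiableAt ℝ f x)
    (hX : DifferentiableAt ℝ X x) :
    divergence (fun y => f y • X y) x = f x * divergence X x + fderiv ℝ f x (X x) := by
  simp only [divergence, fderiv_fun_smul hf hX, map_add, map_smul, smul_eq_mul,
    traceCLM_smulRight]

/-- The second derivatives of `V` recombine into a derivative of `div V` by symmetry of `D²V`. -/
lemma divergence_fderiv_apply_self {V : F → F} (hV : ContDiff ℝ 2 V) (x : F) :
    divergence (fun y => fderiv ℝ V y (V y)) x =
      traceCLM F (fderiv ℝ V x ∘L fderiv ℝ V x) + fderiv ℝ (divergence V) x (V x) := by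
  have hDV : DifferentiableAt ℝ (fderiv ℝ V) x :=
    (hV.fderiv_right (m := 1) (by norm_num)).differentiable one_ne_zero x
  have hsymm : (fderiv ℝ (fderiv ℝ V) x).flip (V x) = fderiv ℝ (fderiv ℝ V) x (V x) := by
    ext v
    exact hV.contDiffAt.isSymmSndFDerivAt (by simp) v (V x)
  have hD : fderiv ℝ (divergence V) x (V x) = traceCLM F (fderiv ℝ (fderiv ℝ V) x (V x)) := by
    have := ((traceCLM F).hasFDerivAt.comp x hDV.hasFDerivAt).fderiv
    exact DFunLike.congr_fun this (V x)
  rw [divergence, fderiv_clm_apply hDV (hV.differentiable two_ne_zero x), map_add, hsymm, hD]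

variable [MeasurableSpace F] [BorelSpace F] {μ : Measure F} [μ.IsAddHaarMeasure]

lemma integral_fderiv_eq_zero {f : F → G} (hf : ContDiff ℝ 1 f) (hfc : HasCompactSupport f) :
    ∫ x, fderiv ℝ f x ∂μ = 0 := by
  have hint := integrable_fderiv_of_hasCompactSupport (μ := μ) hf hfc
  ext v
  have := integral_smul_fderiv_eq_neg_fderiv_smul_of_integrable (μ := μ)
    (f := fun _ => (1 : ℝ)) (g := f) (v := v) (by simp)
    (by simpa using hint.apply_continuousLinearMap v)
    (by simpa using hf.continuous.integrable_of_hasCompactSupport hfc)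
    (fun x _ => differentiableAt_const _) (fun x _ => hf.differentiable one_ne_zero x)
  simpa [ContinuousLinearMap.integral_apply hint] using this

lemma integral_divergence_eq_zero {X : F → F} (hX : ContDiff ℝ 1 X)
    (hXc : HasCompactSupport X) : ∫ x, divergence X x ∂μ = 0 := by
  simp only [divergence]
  rw [(traceCLM F).integral_comp_comm (integrable_fderiv_of_hasCompactSupport hX hXc),
    integral_fderiv_eq_zero hX hXc, map_zero]

end Divergence

section InnerProductSpace

variable {F : Type*} [NormedAddCommGroup F] [InnerProductSpace ℝ F]

lemma isPositive_id_sub_rankOne {v : F} (hv : ‖v‖ ≤ 1) :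
    (ContinuousLinearMap.id ℝ F - InnerProductSpace.rankOne ℝ v v).IsPositive := by
  refine ⟨fun x y => ?_, fun x => ?_⟩
  · simp [inner_sub_left, inner_sub_right, real_inner_smul_right, real_inner_comm, mul_comm]
  · have hCS : ⟪v, x⟫ ^ 2 ≤ ‖x‖ ^ 2 := by
      rw [sq_le_sq, abs_norm]
      exact (abs_real_inner_le_norm v x).trans (mul_le_of_le_one_left (norm_nonneg x) hv)
    simpa [ContinuousLinearMap.reApplyInnerSelf, inner_sub_left, real_inner_smul_left,
      ← pow_two] using hCS

lemma norm_sub_inner_smul_sq {v : F} (hv : ‖v‖ = 1) (w : F) :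
    ‖w - ⟪w, v⟫ • v‖ ^ 2 = ‖w‖ ^ 2 - ⟪w, v⟫ ^ 2 := by
  rw [norm_sub_sq_real, norm_smul, real_inner_smul_right, hv, mul_one, Real.norm_eq_abs, sq_abs]
  ring

variable [CompleteSpace F]

lemma contDiff_gradient {k : WithTop ℕ∞} {f : F → ℝ} (hf : ContDiff ℝ (k + 1) f) :
    ContDiff ℝ k (gradient f) :=
  (InnerProductSpace.toDual ℝ F).symm.contDiff.comp (hf.fderiv_right le_rfl)

lemma inner_fderiv_gradient_comm {f : F → ℝ} (hf : ContDiff ℝ 2 f) (x v w : F) :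
    ⟪fderiv ℝ (gradient f) x v, w⟫ = ⟪v, fderiv ℝ (gradient f) x w⟫ := by
  have hD (v : F) : fderiv ℝ (gradient f) x v =
      (InnerProductSpace.toDual ℝ F).symm (fderiv ℝ (fderiv ℝ f) x v) := by
    have := (InnerProductSpace.toDual ℝ F).symm.toContinuousLinearEquiv.comp_fderiv
      (f := fderiv ℝ f) (x := x)
    exact DFunLike.congr_fun this v
  rw [← real_inner_comm v, hD, hD, InnerProductSpace.toDual_symm_apply,
    InnerProductSpace.toDual_symm_apply]
  exact hf.contDiffAt.isSymmSndFDerivAt (by simp) v w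

end InnerProductSpace

section StabilityCriterion

variable {F : Type*} [NormedAddCommGroup F] [InnerProductSpace ℝ F] [FiniteDimensional ℝ F]
  {Q : F → F →L[ℝ] F} {w : F → F} {q φ : F → ℝ}

/-- Expand the nonnegative `⟪Q (∇φ + φ w), ∇φ + φ w⟫`. -/
lemma sq_mul_le_divergence_add_inner_gradient {x : F} (hQ : (Q x).IsPositive)
    (hQw : DifferentiableAt ℝ (fun y => Q y (w y)) x)
    (hdiv : q x + ⟪Q x (w x), w x⟫ ≤ divergence (fun y => Q y (w y)) x)
    (hφ : DifferentiableAt ℝ φ x) :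
    φ x ^ 2 * q x ≤ divergence (fun y => φ y ^ 2 • Q y (w y)) x +
      ⟪Q x (gradient φ x), gradient φ x⟫ := by
  have hsq : 0 ≤ ⟪Q x (gradient φ x), gradient φ x⟫ + 2 * φ x * fderiv ℝ φ x (Q x (w x)) +
      φ x ^ 2 * ⟪Q x (w x), w x⟫ := by
    refine (hQ.inner_nonneg_left (gradient φ x + φ x • w x)).trans_eq ?_
    have hsymm : ⟪Q x (gradient φ x), w x⟫ = fderiv ℝ φ x (Q x (w x)) := by
      rw [hQ.inner_left_eq_inner_right, inner_gradient_left]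
    simp only [map_add, map_smul, inner_add_left, inner_add_right, real_inner_smul_left,
      real_inner_smul_right, hsymm, inner_gradient_right, conj_trivial]
    ring
  rw [divergence_smul (hφ.fun_pow 2) hQw, fderiv_fun_pow 2 hφ]
  simp only [Nat.add_one_sub_one, pow_one, nsmul_eq_mul, Nat.cast_ofNat, smul_apply,
    smul_eq_mul]
  nlinarith [mul_le_mul_of_nonneg_left hdiv (sq_nonneg (φ x))]

variable [MeasurableSpace F] [BorelSpace F] {μ : Measure F} [μ.IsAddHaarMeasure]

/-- Barta's trick: if `w = ∇ log f`, the hypothesis `hdiv` makes `1 / f` a positive supersolution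
of `div (Q ∇ ·) + q`, and the conclusion is nonnegativity of the quadratic form of that operator. -/
theorem integral_sq_mul_le_integral_inner_gradient (hQ : ∀ x, (Q x).IsPositive)
    (hQc : Continuous Q) (hQw : ContDiff ℝ 1 fun x => Q x (w x)) (hq : Continuous q)
    (hdiv : ∀ x, q x + ⟪Q x (w x), w x⟫ ≤ divergence (fun y => Q y (w y)) x)
    (hφ : ContDiff ℝ 1 φ) (hφc : HasCompactSupport φ) :
    ∫ x, φ x ^ 2 * q x ∂μ ≤ ∫ x, ⟪Q x (gradient φ x), gradient φ x⟫ ∂μ := by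
  have hY : ContDiff ℝ 1 fun x => φ x ^ 2 • Q x (w x) := (hφ.pow 2).smul hQw
  have hYc : HasCompactSupport fun x => φ x ^ 2 • Q x (w x) :=
    hφc.mono fun x hx h0 => hx (by simp [h0])
  have hleft : Integrable (fun x => φ x ^ 2 * q x) μ :=
    ((hφ.continuous.pow 2).mul hq).integrable_of_hasCompactSupport
      (hφc.mono fun x hx h0 => hx (by simp [h0]))
  have hdivY : Integrable (divergence fun x => φ x ^ 2 • Q x (w x)) μ :=
    (traceCLM F).integrable_comp (integrable_fderiv_of_hasCompactSupport hY hYc)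
  have hgrad : Continuous (gradient φ) := (contDiff_gradient (k := 0) (by simpa)).continuous
  have hright : Integrable (fun x => ⟪Q x (gradient φ x), gradient φ x⟫) μ :=
    ((hQc.clm_apply hgrad).inner hgrad).integrable_of_hasCompactSupport
      ((hφc.fderiv (𝕜 := ℝ)).mono fun x hx h0 => hx (by simp [gradient, h0]))
  calc ∫ x, φ x ^ 2 * q x ∂μ
      ≤ ∫ x, (divergence (fun y => φ y ^ 2 • Q y (w y)) x +
          ⟪Q x (gradient φ x), gradient φ x⟫) ∂μ :=
        integral_mono hleft (hdivY.add hright) fun x =>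
          sq_mul_le_divergence_add_inner_gradient (hQ x) (hQw.differentiable one_ne_zero x)
            (hdiv x) (hφ.differentiable one_ne_zero x)
    _ = ∫ x, ⟪Q x (gradient φ x), gradient φ x⟫ ∂μ := by
        rw [integral_add hdivY hright, integral_divergence_eq_zero hY hYc, zero_add]

end StabilityCriterion

section EuclideanSpace

variable {n : ℕ}

lemma fderiv_apply_coord {F : Type*} [NormedAddCommGroup F] [NormedSpace ℝ F] {X : F → E n}
    {x : F} (hX : DifferentiableAt ℝ X x) (i : Fin n) (v : F) :
    fderiv ℝ (fun y => X y i) x v = fderiv ℝ X x v i := by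
  have := ((EuclideanSpace.proj (𝕜 := ℝ) i).hasFDerivAt.comp x hX.hasFDerivAt).fderiv
  exact DFunLike.congr_fun this v

lemma apply_eq_sum_single (T : E n →L[ℝ] E n) (v : E n) (i : Fin n) :
    T v i = ∑ j, T (EuclideanSpace.single j 1) i * v j := by
  conv_lhs => rw [← (EuclideanSpace.basisFun (Fin n) ℝ).sum_repr v]
  simp [mul_comm]

lemma traceCLM_eq_sum (T : E n →L[ℝ] E n) :
    traceCLM (E n) T = ∑ i, T (EuclideanSpace.single i 1) i := by
  rw [traceCLM_apply, LinearMap.trace_eq_sum_inner _ (EuclideanSpace.basisFun (Fin n) ℝ)]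
  simp [EuclideanSpace.inner_single_left]

end EuclideanSpace

section Graph

variable {n : ℕ} {u : E n → ℝ} {k : WithTop ℕ∞}

lemma aEl_pos (u : E n → ℝ) (x : E n) : 0 < aEl u x :=
  Real.sqrt_pos.2 (by positivity)

lemma aEl_sq (u : E n → ℝ) (x : E n) : aEl u x ^ 2 = 1 + ‖gradient u x‖ ^ 2 :=
  Real.sq_sqrt (by positivity)

lemma gradient_eq_aEl_smul_Vfield (u : E n → ℝ) (x : E n) :
    gradient u x = aEl u x • Vfield u x :=
  (smul_inv_smul₀ (aEl_pos u x).ne' _).symm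

lemma aEl_sq_mul_one_sub_norm_Vfield_sq (u : E n → ℝ) (x : E n) :
    aEl u x ^ 2 * (1 - ‖Vfield u x‖ ^ 2) = 1 := by
  have h := aEl_sq u x
  rw [gradient_eq_aEl_smul_Vfield, norm_smul, Real.norm_of_nonneg (aEl_pos u x).le] at h
  linear_combination h

lemma norm_Vfield_le_one (u : E n → ℝ) (x : E n) : ‖Vfield u x‖ ≤ 1 := by
  have h : 0 < 1 - ‖Vfield u x‖ ^ 2 := pos_of_mul_pos_right
    (by rw [aEl_sq_mul_one_sub_norm_Vfield_sq]; exact one_pos) (sq_nonneg (aEl u x))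
  nlinarith [norm_nonneg (Vfield u x)]

lemma contDiff_aEl (hu : ContDiff ℝ (k + 1) u) : ContDiff ℝ k (aEl u) :=
  (contDiff_const.add ((contDiff_gradient hu).norm_sq ℝ)).sqrt fun x => by positivity

lemma contDiff_Vfield (hu : ContDiff ℝ (k + 1) u) : ContDiff ℝ k (Vfield u) :=
  ((contDiff_aEl hu).inv fun x => (aEl_pos u x).ne').smul (contDiff_gradient hu)

lemma differentiable_aEl (hu : ContDiff ℝ 2 u) : Differentiable ℝ (aEl u) :=
  (contDiff_aEl (k := 1) (by simpa)).differentiable one_ne_zero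

lemma differentiable_Vfield (hu : ContDiff ℝ 2 u) : Differentiable ℝ (Vfield u) :=
  (contDiff_Vfield (k := 1) (by simpa)).differentiable one_ne_zero

lemma contDiff_fderiv_Vfield_apply_self (hu : ContDiff ℝ 3 u) :
    ContDiff ℝ 1 fun x => fderiv ℝ (Vfield u) x (Vfield u x) :=
  have hV : ContDiff ℝ 2 (Vfield u) := contDiff_Vfield (by norm_num [hu])
  (hV.fderiv_right (m := 1) (by norm_num)).clm_apply (hV.of_le one_le_two)

/-- The inverse induced metric `g^{ij} = I - V ⊗ V` of the graph, as an operator on the base. -/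
noncomputable def cometric (u : E n → ℝ) (x : E n) : E n →L[ℝ] E n :=
  ContinuousLinearMap.id ℝ (E n) - InnerProductSpace.rankOne ℝ (Vfield u x) (Vfield u x)

lemma cometric_apply (u : E n → ℝ) (x v : E n) :
    cometric u x v = v - ⟪Vfield u x, v⟫ • Vfield u x := rfl

lemma isPositive_cometric (u : E n → ℝ) (x : E n) : (cometric u x).IsPositive :=
  isPositive_id_sub_rankOne (norm_Vfield_le_one u x)

lemma continuous_cometric (hu : ContDiff ℝ 1 u) : Continuous (cometric u) := by
  have hV : Continuous (Vfield u) := (contDiff_Vfield (k := 0) (by simpa)).continuous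
  have hVV : Continuous fun x => InnerProductSpace.rankOne ℝ (Vfield u x) (Vfield u x) :=
    ((InnerProductSpace.rankOne ℝ).continuous.comp hV).clm_apply hV
  exact continuous_const.sub hVV

lemma cometric_gradient (u : E n → ℝ) (x : E n) :
    aEl u x • cometric u x (gradient u x) = Vfield u x := by
  rw [cometric_apply, gradient_eq_aEl_smul_Vfield, real_inner_smul_right,
    real_inner_self_eq_norm_sq, mul_smul, ← smul_sub, smul_smul, ← pow_two]
  nth_rw 1 [← one_smul ℝ (Vfield u x)]
  rw [← sub_smul, smul_smul, aEl_sq_mul_one_sub_norm_Vfield_sq, one_smul]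

lemma aEl_mul_inner_gradient_cometric (u : E n → ℝ) (x v : E n) :
    aEl u x * ⟪gradient u x, cometric u x v⟫ = ⟪Vfield u x, v⟫ := by
  rw [← (isPositive_cometric u x).inner_left_eq_inner_right, ← real_inner_smul_left,
    cometric_gradient]

lemma ginv_eq (u : E n → ℝ) (x : E n) (i j : Fin n) :
    ginv u x i j = (if i = j then 1 else 0) - Vfield u x i * Vfield u x j := by
  have ha := (aEl_pos u x).ne'
  simp only [ginv, Vfield, PiLp.smul_apply, smul_eq_mul]
  field_simp

lemma ginv_comm (u : E n → ℝ) (x : E n) (i j : Fin n) : ginv u x i j = ginv u x j i := by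
  simp only [ginv, eq_comm, mul_comm]

lemma sum_ginv_mul (u : E n → ℝ) (x v : E n) (i : Fin n) :
    ∑ j, ginv u x i j * v j = cometric u x v i := by
  simp only [ginv_eq, sub_mul, ite_mul, one_mul, zero_mul, Finset.sum_sub_distrib,
    Finset.sum_ite_eq, Finset.mem_univ, if_true, cometric_apply, PiLp.sub_apply, PiLp.smul_apply,
    PiLp.inner_apply, smul_eq_mul, RCLike.inner_apply, conj_trivial, Finset.sum_mul]
  congr 1
  exact Finset.sum_congr rfl fun j _ => by ring

lemma fderiv_aEl (hu : ContDiff ℝ 2 u) (x v : E n) :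
    fderiv ℝ (aEl u) x v = ⟪Vfield u x, fderiv ℝ (gradient u) x v⟫ := by
  have hdu : DifferentiableAt ℝ (gradient u) x :=
    (contDiff_gradient (k := 1) (by simpa)).differentiable one_ne_zero x
  have ha : HasFDerivAt (aEl u) _ x :=
    (hdu.hasFDerivAt.norm_sq.const_add 1).sqrt (by positivity)
  rw [ha.fderiv, Vfield, real_inner_smul_left]
  simp only [one_div, mul_inv_rev, smul_apply, ContinuousLinearMap.comp_apply,
    coe_innerSL_apply, nsmul_eq_mul, Nat.cast_ofNat, smul_eq_mul, aEl]
  ring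

lemma gradient_aEl (hu : ContDiff ℝ 2 u) (x : E n) :
    gradient (aEl u) x = fderiv ℝ (gradient u) x (Vfield u x) := by
  refine ext_inner_right ℝ fun v => ?_
  rw [inner_gradient_left, fderiv_aEl hu, inner_fderiv_gradient_comm hu]

lemma cometric_fderiv_gradient (hu : ContDiff ℝ 2 u) (x v : E n) :
    cometric u x (fderiv ℝ (gradient u) x v) = aEl u x • fderiv ℝ (Vfield u) x v := by
  rw [cometric_apply, ← fderiv_aEl hu, funext (gradient_eq_aEl_smul_Vfield u),
    fderiv_fun_smul (differentiable_aEl hu x) (differentiable_Vfield hu x)]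
  simp

lemma cometric_gradient_aEl (hu : ContDiff ℝ 2 u) (x : E n) :
    cometric u x (gradient (aEl u) x) = aEl u x • fderiv ℝ (Vfield u) x (Vfield u x) := by
  rw [gradient_aEl hu, cometric_fderiv_gradient hu]

lemma divV_eq_divergence (hu : ContDiff ℝ 2 u) : divV u = divergence (Vfield u) := by
  funext x
  simp only [divV, divergence, traceCLM_eq_sum, fderiv_apply_coord (differentiable_Vfield hu x)]

lemma hess_eq (hu : ContDiff ℝ 2 u) (x : E n) (i j : Fin n) :
    hess u x i j = fderiv ℝ (gradient u) x (EuclideanSpace.single i 1) j :=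
  fderiv_apply_coord ((contDiff_gradient (k := 1) (by simpa)).differentiable one_ne_zero x) j _

lemma hess_comm (hu : ContDiff ℝ 2 u) (x : E n) (i j : Fin n) : hess u x i j = hess u x j i := by
  have := inner_fderiv_gradient_comm hu x (EuclideanSpace.single i 1) (EuclideanSpace.single j 1)
  simpa [EuclideanSpace.inner_single_left, EuclideanSpace.inner_single_right, hess_eq hu]
    using this

lemma sum_ginv_mul_hess (hu : ContDiff ℝ 2 u) (x : E n) (i j : Fin n) :
    ∑ l, ginv u x i l * hess u x j l =
      aEl u x * fderiv ℝ (Vfield u) x (EuclideanSpace.single j 1) i := by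
  simp only [hess_eq hu, sum_ginv_mul, cometric_fderiv_gradient hu, PiLp.smul_apply, smul_eq_mul]

/-- `DV = g⁻¹h` is the shape operator of the graph in the coordinates of the base. -/
lemma A2_eq_traceCLM (hu : ContDiff ℝ 2 u) (x : E n) :
    A2 u x = traceCLM (E n) (fderiv ℝ (Vfield u) x ∘L fderiv ℝ (Vfield u) x) := by
  set S := fderiv ℝ (Vfield u) x
  have ha := (aEl_pos u x).ne'
  have hsum (j k : Fin n) :
      ∑ i, ∑ l, ginv u x i k * ginv u x j l * hess u x i j * hess u x k l =
        aEl u x ^ 2 * (S (EuclideanSpace.single j 1) k * S (EuclideanSpace.single k 1) j) := by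
    calc ∑ i, ∑ l, ginv u x i k * ginv u x j l * hess u x i j * hess u x k l
        = (∑ i, ginv u x k i * hess u x j i) * ∑ l, ginv u x j l * hess u x k l := by
          rw [Finset.sum_mul_sum]
          refine Finset.sum_congr rfl fun i _ => Finset.sum_congr rfl fun l _ => ?_
          rw [ginv_comm u x i k, hess_comm hu x i j]
          ring
      _ = aEl u x ^ 2 * (S (EuclideanSpace.single j 1) k * S (EuclideanSpace.single k 1) j) := by
          rw [sum_ginv_mul_hess hu, sum_ginv_mul_hess hu]
          ring
  rw [A2, div_eq_iff (pow_ne_zero 2 ha), traceCLM_eq_sum, Finset.sum_comm, Finset.sum_mul]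
  refine Finset.sum_congr rfl fun j _ => ?_
  rw [Finset.sum_comm, ContinuousLinearMap.comp_apply, apply_eq_sum_single, Finset.sum_mul]
  refine Finset.sum_congr rfl fun k _ => ?_
  rw [hsum]
  ring

lemma continuous_A2 (hu : ContDiff ℝ 2 u) : Continuous (A2 u) := by
  have hDV : Continuous (fderiv ℝ (Vfield u)) :=
    (contDiff_Vfield (k := 1) (by simpa)).continuous_fderiv one_ne_zero
  rw [funext (A2_eq_traceCLM hu)]
  exact (traceCLM (E n)).continuous.comp (hDV.clm_comp hDV)

end Graph

section AmbientFunctions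

variable {n : ℕ} {u : E n → ℝ} {η : E (n + 1) → ℝ}

lemma inner_eq_inner_projE_add (p q : E (n + 1)) :
    ⟪p, q⟫ = ⟪projE p, projE q⟫ + p (Fin.last n) * q (Fin.last n) := by
  simp [projE, PiLp.inner_apply, Fin.sum_univ_castSucc, mul_comm]

lemma projE_Pos (u : E n → ℝ) (x : E n) : projE (Pos u x) = x := by
  ext i
  simp [projE, Pos]

lemma Pos_last (u : E n → ℝ) (x : E n) : Pos u x (Fin.last n) = u x := by
  simp [Pos]

lemma projE_NmlAt (u : E n → ℝ) (x : E n) : projE (NmlAt u x) = -Vfield u x := by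
  ext i
  simp [projE, NmlAt]

lemma NmlAt_last (u : E n → ℝ) (x : E n) : NmlAt u x (Fin.last n) = (aEl u x)⁻¹ := by
  simp [NmlAt]

lemma norm_Pos_sq (u : E n → ℝ) (x : E n) : ‖Pos u x‖ ^ 2 = ‖x‖ ^ 2 + u x ^ 2 := by
  rw [← real_inner_self_eq_norm_sq, inner_eq_inner_projE_add, projE_Pos, Pos_last,
    real_inner_self_eq_norm_sq, ← pow_two]

lemma norm_NmlAt (u : E n → ℝ) (x : E n) : ‖NmlAt u x‖ = 1 := by
  have ha := (aEl_pos u x).ne'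
  rw [← sq_eq_sq₀ (norm_nonneg _) zero_le_one, ← real_inner_self_eq_norm_sq,
    inner_eq_inner_projE_add, projE_NmlAt, NmlAt_last, inner_neg_neg, real_inner_self_eq_norm_sq]
  field_simp
  linear_combination -aEl_sq_mul_one_sub_norm_Vfield_sq u x

lemma norm_le_norm_Pos (u : E n → ℝ) (x : E n) : ‖x‖ ≤ ‖Pos u x‖ := by
  refine le_of_sq_le_sq ?_ (norm_nonneg _)
  rw [norm_Pos_sq]
  exact le_add_of_nonneg_right (sq_nonneg _)

lemma contDiff_Pos {k : WithTop ℕ∞} (hu : ContDiff ℝ k u) : ContDiff ℝ k (Pos u) := by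
  refine contDiff_euclidean.2 (Fin.lastCases ?_ fun j => ?_)
  · simpa only [Pos_last] using hu
  · simpa [Pos] using (EuclideanSpace.proj (𝕜 := ℝ) j).contDiff

lemma hasCompactSupport_comp_Pos (u : E n → ℝ) (hη : HasCompactSupport η) :
    HasCompactSupport (η ∘ Pos u) := by
  obtain ⟨R, hR⟩ := hη.isCompact.isBounded.exists_norm_le
  refine HasCompactSupport.intro (isCompact_closedBall (0 : E n) R) fun x hx => ?_
  contrapose! hx
  exact mem_closedBall_zero_iff.2 ((norm_le_norm_Pos u x).trans (hR _ (subset_tsupport η hx)))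

lemma projE_fderiv_Pos (hu : ContDiff ℝ 1 u) (x v : E n) :
    projE (fderiv ℝ (Pos u) x v) = v := by
  ext i
  have hP := (contDiff_Pos hu).differentiable one_ne_zero x
  have hcoord : (fun y => Pos u y i.castSucc) = EuclideanSpace.proj (𝕜 := ℝ) i := by
    ext y
    exact congrArg (fun p => p i) (projE_Pos u y)
  rw [show projE (fderiv ℝ (Pos u) x v) i = fderiv ℝ (Pos u) x v i.castSucc from rfl,
    ← fderiv_apply_coord hP, hcoord, ContinuousLinearMap.fderiv]
  rfl

lemma fderiv_Pos_last (hu : ContDiff ℝ 1 u) (x v : E n) :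
    fderiv ℝ (Pos u) x v (Fin.last n) = fderiv ℝ u x v := by
  rw [← fderiv_apply_coord ((contDiff_Pos hu).differentiable one_ne_zero x)]
  simp only [Pos_last]

lemma gradient_comp_Pos (hu : ContDiff ℝ 1 u) {x : E n} (hη : DifferentiableAt ℝ η (Pos u x)) :
    gradient (η ∘ Pos u) x =
      projE (gradient η (Pos u x)) + gradient η (Pos u x) (Fin.last n) • gradient u x := by
  have hP := (contDiff_Pos hu).differentiable one_ne_zero x
  refine ext_inner_right ℝ fun v => ?_
  have hchain : fderiv ℝ (η ∘ Pos u) x v =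
      fderiv ℝ η (Pos u x) (fderiv ℝ (Pos u) x v) := DFunLike.congr_fun (fderiv_comp x hη hP) v
  rw [inner_gradient_left, hchain, ← inner_gradient_left, inner_eq_inner_projE_add,
    projE_fderiv_Pos hu, fderiv_Pos_last hu, inner_add_left, real_inner_smul_left,
    inner_gradient_left]

lemma norm_gradSigmaAmb_sq (hu : ContDiff ℝ 1 u) {x : E n}
    (hη : DifferentiableAt ℝ η (Pos u x)) :
    ‖gradSigmaAmb u η x‖ ^ 2 = ⟪cometric u x (gradient (η ∘ Pos u) x),
      gradient (η ∘ Pos u) x⟫ := by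
  have ha := (aEl_pos u x).ne'
  rw [gradSigmaAmb, norm_sub_inner_smul_sq (norm_NmlAt u x), gradient_comp_Pos hu hη,
    ← real_inner_self_eq_norm_sq, inner_eq_inner_projE_add,
    inner_eq_inner_projE_add _ (NmlAt u x), projE_NmlAt, NmlAt_last, gradient_eq_aEl_smul_Vfield u]
  set g := projE (gradient η (Pos u x))
  set γ := gradient η (Pos u x) (Fin.last n)
  simp only [cometric_apply, inner_sub_left, inner_add_left, inner_add_right,
    real_inner_smul_left, real_inner_smul_right, inner_neg_right, real_inner_comm (Vfield u x) g,
    real_inner_self_eq_norm_sq, smul_smul, norm_smul, mul_pow, Real.norm_eq_abs, sq_abs]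
  field_simp
  linear_combination (γ ^ 2 - γ ^ 2 * aEl u x ^ 2 * ‖Vfield u x‖ ^ 2
    - 2 * ⟪Vfield u x, g⟫ * aEl u x * γ) * aEl_sq_mul_one_sub_norm_Vfield_sq u x

end AmbientFunctions

section Stability

variable {n : ℕ} {u : E n → ℝ} {k : WithTop ℕ∞}

/-- The Gaussian weight `e^{-|X|²/4}` along the graph, as a function on the base. -/
noncomputable def gaussWeight (u : E n → ℝ) (x : E n) : ℝ := Real.exp (-‖Pos u x‖ ^ 2 / 4)

lemma gaussWeight_pos (u : E n → ℝ) (x : E n) : 0 < gaussWeight u x := Real.exp_pos _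

lemma contDiff_gaussWeight (hu : ContDiff ℝ k u) : ContDiff ℝ k (gaussWeight u) :=
  (((contDiff_Pos hu).norm_sq ℝ).neg.div_const 4).exp

lemma fderiv_gaussWeight {x : E n} (hu : DifferentiableAt ℝ u x) (v : E n) :
    fderiv ℝ (gaussWeight u) x v = -(gaussWeight u x / 2) * ⟪x + u x • gradient u x, v⟫ := by
  have hρ : HasFDerivAt (fun y => Real.exp (-(‖y‖ ^ 2 + u y ^ 2) * 4⁻¹)) _ x :=
    (((hasFDerivAt_id x).norm_sq.add (hu.hasFDerivAt.pow 2)).neg.mul_const (4⁻¹ : ℝ)).exp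
  have heq : gaussWeight u = fun y => Real.exp (-(‖y‖ ^ 2 + u y ^ 2) * 4⁻¹) := by
    simp only [← norm_Pos_sq]
    rfl
  rw [heq, hρ.fderiv]
  simp only [id_eq, Pi.neg_apply, Pi.add_apply, ContinuousLinearMap.comp_id,
    Nat.add_one_sub_one, pow_one, nsmul_eq_mul, Nat.cast_ofNat, add_apply, neg_apply, smul_apply,
    smul_eq_mul, coe_innerSL_apply, inner_add_left, real_inner_smul_left, inner_gradient_left]
  ring

lemma ShrinkerEq.two_mul_divergence_Vfield (hshr : ShrinkerEq u) (hu : ContDiff ℝ 2 u)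
    (x : E n) : 2 * divergence (Vfield u) x = ⟪x, Vfield u x⟫ - u x * (aEl u x)⁻¹ := by
  have ha := (aEl_pos u x).ne'
  rw [← divV_eq_divergence hu, hshr x, Vfield, real_inner_smul_right]
  field_simp

lemma ShrinkerEq.two_mul_fderiv_divergence_Vfield (hshr : ShrinkerEq u) (hu : ContDiff ℝ 3 u)
    (x v : E n) : 2 * fderiv ℝ (divergence (Vfield u)) x v =
      ⟪x, fderiv ℝ (Vfield u) x v⟫ + u x * ((aEl u x ^ 2)⁻¹ * fderiv ℝ (aEl u) x v) := by
  have hu2 : ContDiff ℝ 2 u := hu.of_le (by norm_num)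
  have ha := (aEl_pos u x).ne'
  have hdiv : DifferentiableAt ℝ (divergence (Vfield u)) x :=
    (contDiff_divergence (k := 1) (contDiff_Vfield (by norm_num [hu]))).differentiable
      one_ne_zero x
  have hV : HasFDerivAt (fun y => ⟪y, Vfield u y⟫) _ x :=
    (hasFDerivAt_id x).inner ℝ (differentiable_Vfield hu2 x).hasFDerivAt
  have hua : HasFDerivAt (fun y => u y * (aEl u y)⁻¹) _ x :=
    (hu2.differentiable two_ne_zero x).hasFDerivAt.mul
      ((hasDerivAt_inv ha).comp_hasFDerivAt x (differentiable_aEl hu2 x).hasFDerivAt)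
  have hderiv : HasFDerivAt (fun y => 2 * divergence (Vfield u) y) _ x :=
    (hV.fun_sub hua).congr_of_eventuallyEq (.of_forall (hshr.two_mul_divergence_Vfield hu2))
  have hv : ⟪v, Vfield u x⟫ = (aEl u x)⁻¹ * fderiv ℝ u x v := by
    rw [Vfield, real_inner_smul_right, inner_gradient_right, conj_trivial]
  simpa [hv] using
    DFunLike.congr_fun ((hdiv.hasFDerivAt.const_mul 2).unique hderiv) v

lemma ShrinkerEq.two_mul_aEl_mul_fderiv_divergence_Vfield (hshr : ShrinkerEq u)
    (hu : ContDiff ℝ 3 u) (x : E n) :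
    2 * aEl u x * fderiv ℝ (divergence (Vfield u)) x (Vfield u x) =
      ⟪x + u x • gradient u x, cometric u x (gradient (aEl u) x)⟫ := by
  have hu2 : ContDiff ℝ 2 u := hu.of_le (by norm_num)
  have ha := (aEl_pos u x).ne'
  have hgrad := aEl_mul_inner_gradient_cometric u x (gradient (aEl u) x)
  rw [inner_gradient_right, conj_trivial] at hgrad
  rw [mul_right_comm, hshr.two_mul_fderiv_divergence_Vfield hu, ← hgrad, inner_add_left,
    real_inner_smul_left, cometric_gradient_aEl hu2 x, real_inner_smul_right x]
  field_simp

/-- The drift term of the weight cancels the derivative of the mean curvature, because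
`x + u ∇u = ∇(|X|²/2)`. -/
lemma ShrinkerEq.divergence_gaussWeight_smul_cometric (hshr : ShrinkerEq u)
    (hu : ContDiff ℝ 3 u) (x : E n) :
    divergence (fun y => gaussWeight u y • cometric u y (gradient (aEl u) y)) x =
      gaussWeight u x * (aEl u x * A2 u x +
        (aEl u x)⁻¹ * ⟪cometric u x (gradient (aEl u) x), gradient (aEl u) x⟫) := by
  have hu2 : ContDiff ℝ 2 u := hu.of_le (by norm_num)
  have ha := (aEl_pos u x).ne'
  have hV : ContDiff ℝ 2 (Vfield u) := contDiff_Vfield (by norm_num [hu])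
  have hρ : DifferentiableAt ℝ (gaussWeight u) x :=
    (contDiff_gaussWeight hu2).differentiable two_ne_zero x
  have hDVV : DifferentiableAt ℝ (fun y => fderiv ℝ (Vfield u) y (Vfield u y)) x :=
    (contDiff_fderiv_Vfield_apply_self hu).differentiable one_ne_zero x
  have ha₁ : DifferentiableAt ℝ (aEl u) x := differentiable_aEl hu2 x
  have hP : (fun y => cometric u y (gradient (aEl u) y)) =
      fun y => aEl u y • fderiv ℝ (Vfield u) y (Vfield u y) :=
    funext (cometric_gradient_aEl hu2)
  rw [divergence_smul hρ (hP ▸ ha₁.smul hDVV),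
    fderiv_gaussWeight (hu2.differentiable two_ne_zero x),
    ← hshr.two_mul_aEl_mul_fderiv_divergence_Vfield hu, hP, divergence_smul ha₁ hDVV,
    divergence_fderiv_apply_self hV, ← A2_eq_traceCLM hu2, cometric_gradient_aEl hu2,
    real_inner_smul_left, inner_gradient_right, conj_trivial]
  field_simp
  ring

lemma ShrinkerEq.integral_sq_mul_A2_le (hshr : ShrinkerEq u) (hu : ContDiff ℝ 3 u)
    {φ : E n → ℝ} (hφ : ContDiff ℝ 1 φ) (hφc : HasCompactSupport φ) :
    ∫ x, φ x ^ 2 * (A2 u x * gaussWeight u x * aEl u x) ≤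
      ∫ x, ⟪cometric u x (gradient φ x), gradient φ x⟫ * gaussWeight u x * aEl u x := by
  have hu2 : ContDiff ℝ 2 u := hu.of_le (by norm_num)
  have hρ : ContDiff ℝ 2 (gaussWeight u) := contDiff_gaussWeight hu2
  have ha : ContDiff ℝ 2 (aEl u) := contDiff_aEl (by norm_num [hu])
  let Q (x : E n) : E n →L[ℝ] E n := (gaussWeight u x * aEl u x) • cometric u x
  let w (x : E n) : E n := (aEl u x)⁻¹ • gradient (aEl u) x
  have hQ (x : E n) : (Q x).IsPositive := (isPositive_cometric u x).smul_of_nonneg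
    (mul_pos (gaussWeight_pos u x) (aEl_pos u x)).le
  have hQc : Continuous Q :=
    (hρ.continuous.mul ha.continuous).smul (continuous_cometric (hu.of_le (by norm_num)))
  have hQw : (fun x => Q x (w x)) =
      fun x => gaussWeight u x • cometric u x (gradient (aEl u) x) := by
    funext x
    simp only [Q, w, map_smul, smul_apply, smul_smul]
    rw [mul_left_comm, inv_mul_cancel₀ (aEl_pos u x).ne', mul_one]
  have hQwC : ContDiff ℝ 1 fun x => Q x (w x) := by
    simp only [hQw, cometric_gradient_aEl hu2]
    exact (hρ.of_le one_le_two).smul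
      ((ha.of_le one_le_two).smul (contDiff_fderiv_Vfield_apply_self hu))
  have hq : Continuous fun x => A2 u x * gaussWeight u x * aEl u x :=
    ((continuous_A2 hu2).mul hρ.continuous).mul ha.continuous
  have hdiv (x : E n) : A2 u x * gaussWeight u x * aEl u x + ⟪Q x (w x), w x⟫ ≤
      divergence (fun y => Q y (w y)) x := by
    rw [congr_fun hQw x, hQw, hshr.divergence_gaussWeight_smul_cometric hu, real_inner_smul_left,
      real_inner_smul_right]
    exact le_of_eq (by ring)
  refine (integral_sq_mul_le_integral_inner_gradient hQ hQc hQwC hq hdiv hφ hφc).trans_eq ?_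
  refine integral_congr_ae (.of_forall fun x => ?_)
  simp only [Q, smul_apply, real_inner_smul_left]
  ring

end Stability

theorem stmt_5_general (n : ℕ) (u : E n → ℝ) (hu : ContDiff ℝ 3 u) (hshr : ShrinkerEq u)
    (η : E (n + 1) → ℝ) (hη : ContDiff ℝ 1 η) (hηc : HasCompactSupport η) :
    ∫ x : E n, (η (Pos u x)) ^ 2 * A2 u x *
        Real.exp (-‖Pos u x‖ ^ 2 / 4) * aEl u x ≤
      ∫ x : E n, ‖gradSigmaAmb u η x‖ ^ 2 *
        Real.exp (-‖Pos u x‖ ^ 2 / 4) * aEl u x := by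
  have hu1 : ContDiff ℝ 1 u := hu.of_le (by norm_num)
  simp only [norm_gradSigmaAmb_sq hu1 (hη.differentiable one_ne_zero _), mul_assoc]
  simpa only [mul_assoc, gaussWeight, Function.comp_apply] using
    hshr.integral_sq_mul_A2_le hu (hη.comp (contDiff_Pos hu1)) (hasCompactSupport_comp_Pos u hηc)

/-- weighted stability inequality for entire graphical self-shrinkers:
`∫_Σ η²|A|² e^{-|X|²/4} ≤ ∫_Σ |∇_Σ η|² e^{-|X|²/4}` for every smooth compactly
supported `η` on `ℝ^{n+1}` (integrals written via the area formula). -/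
theorem stmt_5 (n : ℕ) (u : E n → ℝ) (hu : ContDiff ℝ (⊤ : ℕ∞) u) (hshr : ShrinkerEq u)
    (η : E (n + 1) → ℝ) (hη : ContDiff ℝ (⊤ : ℕ∞) η) (hηc : HasCompactSupport η) :
    ∫ x : E n, (η (Pos u x)) ^ 2 * A2 u x *
        Real.exp (-‖Pos u x‖ ^ 2 / 4) * aEl u x ≤
      ∫ x : E n, ‖gradSigmaAmb u η x‖ ^ 2 *
        Real.exp (-‖Pos u x‖ ^ 2 / 4) * aEl u x := by
  exact stmt_5_general n u (contDiff_infty.1 hu 3) hshr η (contDiff_infty.1 hη 1) hηc
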